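/- Let F be a number field in which the prime number p is unramified, and let n ≥ 1. Then there exist infinitely many prime numbers q such that q ≡ 1 (mod pⁿ) and q splits completely in F, i.e. the ideal q𝓞_F factors as a product of [F : ℚ] distinct prime ideals of 𝓞_F each with residue field of cardinality q. -/

import Mathlib

open NumberField Polynomial

/-- A number field has a power basis over `ℚ` generated by a nonzero algebraic integer. -/
theorem exists_powerBasis_integral_gen (L : Type*) [Field L] [NumberField L] :
    ∃ B : PowerBasis ℚ L, IsIntegral ℤ B.gen ∧ B.gen ≠ 0 := by
  have key : ∀ x : L, Algebra.adjoin ℚ {x} = ⊤ →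
      IsIntegral ℤ x → x ≠ 0 → ∃ B : PowerBasis ℚ L, IsIntegral ℤ B.gen ∧ B.gen ≠ 0 := by
    intro x hx hint hne
    refine ⟨PowerBasis.ofAdjoinEqTop (IsIntegral.of_finite ℚ x) hx, ?_⟩
    rw [PowerBasis.ofAdjoinEqTop_gen]
    exact ⟨hint, hne⟩
  obtain ⟨α, hα⟩ := Field.exists_primitive_element ℚ L
  have hα' : Algebra.adjoin ℚ {α} = ⊤ := by
    rw [← IntermediateField.adjoin_simple_toSubalgebra_of_isAlgebraic
      (Algebra.IsAlgebraic.isAlgebraic α), hα, IntermediateField.top_toSubalgebra]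
  by_cases h0 : α = 0
  · refine key 1 ?_ isIntegral_one one_ne_zero
    rw [← hα', h0]
    refine le_antisymm (Algebra.adjoin_le ?_) (Algebra.adjoin_le ?_) <;>
      simp only [Set.singleton_subset_iff, SetLike.mem_coe, one_mem, zero_mem]
  · obtain ⟨m, hm, hint⟩ := ((IsFractionRing.isAlgebraic_iff ℤ ℚ L).mpr
      (Algebra.IsAlgebraic.isAlgebraic α)).exists_integral_multiple
    have hm' : (m : ℚ) ≠ 0 := by exact_mod_cast hm
    refine key (m • α) ?_ hint (smul_ne_zero hm h0)
    rw [eq_top_iff, ← hα']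
    refine Algebra.adjoin_le (Set.singleton_subset_iff.mpr ?_)
    have h : (m : ℚ)⁻¹ • (m • α) ∈ Algebra.adjoin ℚ {m • α} :=
      Subalgebra.smul_mem _ (Algebra.self_mem_adjoin_singleton ℚ _) _
    rw [← Int.cast_smul_eq_zsmul ℚ, inv_smul_smul₀ hm', Int.cast_smul_eq_zsmul] at h
    exact h

/-- For `x ≠ 0` in a ring of integers, not all the elements `1 - k x` with `k ∈ ℕ` are units. -/
theorem exists_not_isUnit_one_sub_natCast_mul {L : Type*} [Field L] [NumberField L]
    {x : 𝓞 L} (hx : x ≠ 0) : ∃ k : ℕ, ¬ IsUnit (1 - k * x) := by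
  by_contra! h
  have hxL : (x : L) ≠ 0 := by simpa using hx
  set f : L →ₗ[ℚ] L := LinearMap.mul ℚ L (x : L)⁻¹
  have hval : ∀ k : ℕ, (f.charpoly ^ 2).eval (k : ℚ) = (Algebra.norm ℚ (x : L))⁻¹ ^ 2 := by
    intro k
    have hdet : f.charpoly.eval (k : ℚ) = Algebra.norm ℚ ((k : L) - (x : L)⁻¹) := by
      rw [LinearMap.eval_charpoly, Algebra.norm_apply]
      congr 1
      ext y
      simp [f]
    have hunit : |Algebra.norm ℚ ((1 - k * x : 𝓞 L) : L)| = 1 := by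
      have := (NumberField.isUnit_iff_norm (K := L)).mp (h k)
      simpa using this
    have hmul : ((k : L) - (x : L)⁻¹) = - ((x : L)⁻¹ * ((1 - k * x : 𝓞 L) : L)) := by
      push_cast
      field_simp
      ring
    have hneg : Algebra.norm ℚ (-1 : L) ^ 2 = 1 := by
      rw [← map_pow, neg_one_sq, map_one]
    have hinv : Algebra.norm ℚ (x : L)⁻¹ = (Algebra.norm ℚ (x : L))⁻¹ := by
      refine eq_inv_of_mul_eq_one_left ?_
      rw [← map_mul, inv_mul_cancel₀ hxL, map_one]
    rw [eval_pow, hdet, hmul, ← neg_one_mul, map_mul, map_mul, mul_pow, mul_pow, hneg,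
      ← sq_abs (Algebra.norm ℚ ((1 - k * x : 𝓞 L) : L)), hunit, hinv, one_pow, one_mul, mul_one]
  have hconst : f.charpoly ^ 2 = C ((Algebra.norm ℚ (x : L))⁻¹ ^ 2) := by
    refine eq_of_infinite_eval_eq _ _ ((Set.infinite_range_of_injective
      (Nat.cast_injective (R := ℚ))).mono ?_)
    rintro _ ⟨k, rfl⟩
    simpa using hval k
  have hdeg := congrArg natDegree hconst
  rw [natDegree_pow, natDegree_C, LinearMap.charpoly_natDegree] at hdeg
  have := Module.finrank_pos (R := ℚ) (M := L)
  omega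

/-- The integers of a number field are, up to a bounded denominator, contained in `ℤ[β]` for a
nonzero algebraic integer `β`. -/
theorem exists_int_mul_mem_adjoin (L : Type*) [Field L] [NumberField L] :
    ∃ (β : 𝓞 L) (m : ℤ), β ≠ 0 ∧ m ≠ 0 ∧ ∀ x : 𝓞 L, m * x ∈ Algebra.adjoin ℤ {β} := by
  obtain ⟨B, hint, hne⟩ := exists_powerBasis_integral_gen L
  obtain ⟨m, hm⟩ := IsIntegrallyClosed.isIntegral_iff.mp
    (Algebra.discr_isIntegral (K := ℚ) (R := ℤ) (b := B.basis) fun i ↦ by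
      rw [B.basis_eq_pow]; exact hint.pow _)
  obtain ⟨β, hβ⟩ := (IsIntegralClosure.isIntegral_iff (A := 𝓞 L)).mp hint
  refine ⟨β, m, ?_, ?_, fun x ↦ ?_⟩
  · rintro rfl
    exact hne (by rw [← hβ, map_zero])
  · rintro rfl
    exact Algebra.discr_not_zero_of_basis ℚ B.basis (by simpa using hm.symm)
  · have h := Algebra.discr_mul_isIntegral_mem_adjoin (R := ℤ) ℚ hint x.isIntegral_coe
    have himg : Algebra.adjoin ℤ {B.gen} =
        (Algebra.adjoin ℤ {β}).map (IsScalarTower.toAlgHom ℤ (𝓞 L) L) := by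
      rw [AlgHom.map_adjoin, Set.image_singleton, ← hβ]
      rfl
    rw [himg] at h
    obtain ⟨y, hy, hyx⟩ := h
    have : y = m * x := by
      apply RingOfIntegers.ext
      simp only [← hm] at hyx
      simpa [Algebra.smul_def] using hyx
    exact this ▸ hy

/-- The ring of integers of a number field has residue fields `𝔽_q` for arbitrarily large primes
`q`, in which moreover a given nonzero element does not vanish. -/
theorem exists_ringHom_zmod {L : Type*} [Field L] [NumberField L] {D : 𝓞 L} (hD : D ≠ 0)
    (b : ℕ) : ∃ q : ℕ, q.Prime ∧ b < q ∧ ∃ φ : 𝓞 L →+* ZMod q, φ D ≠ 0 := by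
  obtain ⟨β, m, hβ, hm, hmem⟩ := exists_int_mul_mem_adjoin L
  set N := Ideal.absNorm (Ideal.span {D})
  have hN : N ≠ 0 := by simpa [N, Ideal.absNorm_eq_zero_iff] using hD
  have hDN : D ∣ (N : 𝓞 L) := Ideal.mem_span_singleton.mp (Ideal.absNorm_mem _)
  set M : ℤ := m * N * b.factorial
  have hM : M ≠ 0 := by simp [M, hm, hN, Nat.factorial_ne_zero]
  obtain ⟨k, hk⟩ := exists_not_isUnit_one_sub_natCast_mul (x := (M : 𝓞 L) * β)
    (mul_ne_zero (by exact_mod_cast hM) hβ)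
  obtain ⟨Q, hQ, hkQ⟩ := exists_max_ideal_of_mem_nonunits hk
  have hQ0 : Q ≠ ⊥ := Ring.ne_bot_of_isMaximal_of_not_isField hQ (RingOfIntegers.not_isField L)
  let _ : Field (𝓞 L ⧸ Q) := Ideal.Quotient.field Q
  have : Finite (𝓞 L ⧸ Q) := Ideal.finiteQuotientOfFreeOfNeBot Q hQ0
  set π := Ideal.Quotient.mk Q
  have hπ : ((k * M : ℤ) : 𝓞 L ⧸ Q) * π β = 1 := by
    have := Ideal.Quotient.eq_zero_iff_mem.mpr hkQ
    simp only [map_sub, map_one, map_mul, map_natCast, map_intCast] at this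
    rw [sub_eq_zero] at this
    rw [this]
    push_cast
    ring
  have hMπ : (M : 𝓞 L ⧸ Q) ≠ 0 := by
    intro h
    simp [h] at hπ
  obtain ⟨q, hchar⟩ := CharP.exists (𝓞 L ⧸ Q)
  have hq : q.Prime := CharP.char_is_prime (𝓞 L ⧸ Q) q
  have : Fact q.Prime := ⟨hq⟩
  simp only [M, Int.cast_mul, Int.cast_natCast, ne_eq, mul_eq_zero, not_or] at hMπ
  obtain ⟨⟨hmπ, hNπ⟩, hbπ⟩ := hMπ
  set ι := ZMod.castHom (dvd_refl q) (𝓞 L ⧸ Q)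
  have hβι : π β ∈ ι.fieldRange := by
    rw [eq_inv_of_mul_eq_one_right hπ]
    exact inv_mem (intCast_mem _ _)
  have hadj : ∀ y ∈ Algebra.adjoin ℤ {β}, π y ∈ ι.fieldRange := by
    intro y hy
    induction hy using Algebra.adjoin_induction with
    | mem y hy => rwa [Set.mem_singleton_iff.mp hy]
    | algebraMap r => simp
    | add _ _ _ _ h₁ h₂ => rw [map_add]; exact add_mem h₁ h₂
    | mul _ _ _ _ h₁ h₂ => rw [map_mul]; exact mul_mem h₁ h₂
  have hsurj : Function.Surjective ι := by
    intro z
    obtain ⟨x, rfl⟩ := Ideal.Quotient.mk_surjective z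
    change π x ∈ ι.fieldRange
    have h := mul_mem (inv_mem (intCast_mem ι.fieldRange m)) (hadj _ (hmem x))
    rwa [map_mul, map_intCast, inv_mul_cancel_left₀ hmπ] at h
  let e := RingEquiv.ofBijective ι ⟨ι.injective, hsurj⟩
  refine ⟨q, hq, ?_, (e.symm : (𝓞 L ⧸ Q) →+* ZMod q).comp π, ?_⟩
  · by_contra! hle
    exact hbπ ((CharP.cast_eq_zero_iff _ q _).mpr (hq.dvd_factorial.mpr hle))
  · intro h
    obtain ⟨c, hc⟩ := hDN
    have h' : π D = 0 := by simpa using h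
    apply hNπ
    have := congrArg π hc
    rwa [map_natCast, map_mul, h', zero_mul] at this

/-- If there are `[F : ℚ]` distinct ring homomorphisms `𝓞 F → 𝔽_q`, then `q` splits completely. -/
theorem span_natCast_eq_prod_of_card_ringHom {F : Type*} [Field F] [NumberField F] {q : ℕ}
    (hq : q.Prime) {ι : Type*} [Finite ι] (hι : Nat.card ι = Module.finrank ℚ F)
    (ψ : ι → 𝓞 F →+* ZMod q) (hψ : Function.Injective ψ) :
    ∃ s : Finset (Ideal (𝓞 F)), s.card = Module.finrank ℚ F ∧
      (∀ P ∈ s, P.IsPrime ∧ Ideal.absNorm P = q) ∧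
      Ideal.span {(q : 𝓞 F)} = ∏ P ∈ s, P := by
  classical
  have : Fact q.Prime := ⟨hq⟩
  have := Fintype.ofFinite ι
  have hsurj (i : ι) : Function.Surjective (ψ i) := ZMod.ringHom_surjective _
  have hker : Function.Injective fun i ↦ RingHom.ker (ψ i) := fun i j hij ↦
    hψ (ZMod.ringHom_eq_of_ker_eq _ _ hij)
  set s := Finset.univ.image fun i ↦ RingHom.ker (ψ i)
  have hs : s.card = Module.finrank ℚ F := by
    rw [Finset.card_image_of_injective _ hker, Finset.card_univ, ← Nat.card_eq_fintype_card, hι]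
  have hP : ∀ P ∈ s, P.IsPrime ∧ Ideal.absNorm P = q := by
    intro P hP
    obtain ⟨i, -, rfl⟩ := Finset.mem_image.mp hP
    refine ⟨RingHom.ker_isPrime _, ?_⟩
    rw [Ideal.absNorm_apply, Submodule.cardQuot_apply,
      Nat.card_congr (RingHom.quotientKerEquivOfSurjective (hsurj i)).toEquiv, Nat.card_zmod]
  have hprime : ∀ P ∈ s, Prime P := fun P hPs ↦ Ideal.prime_of_isPrime (by
    rintro rfl
    have := (hP _ hPs).2
    rw [Ideal.absNorm_bot] at this
    exact hq.ne_zero this.symm) (hP P hPs).1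
  refine ⟨s, hs, hP, ?_⟩
  have hdvd : ∏ P ∈ s, P ∣ Ideal.span {(q : 𝓞 F)} := by
    refine Finset.prod_primes_dvd _ hprime fun P hPs ↦ ?_
    rw [Ideal.dvd_span_singleton, ← (hP P hPs).2]
    exact Ideal.absNorm_mem P
  have hnorm : Ideal.absNorm (∏ P ∈ s, P) = Ideal.absNorm (Ideal.span {(q : 𝓞 F)}) := by
    rw [map_prod, Finset.prod_congr rfl fun P hPs ↦ (hP P hPs).2, Finset.prod_const, hs,
      Ideal.absNorm_span_natCast, RingOfIntegers.rank]
  obtain ⟨J, hJ⟩ := hdvd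
  have hJ1 : Ideal.absNorm J = 1 := by
    have hne : Ideal.absNorm (∏ P ∈ s, P) ≠ 0 := by
      rw [map_prod, Finset.prod_ne_zero_iff]
      exact fun P hPs ↦ (hP P hPs).2 ▸ hq.ne_zero
    rw [hJ, map_mul] at hnorm
    exact (mul_eq_left₀ hne).mp hnorm.symm
  rw [hJ, Ideal.absNorm_eq_one_iff.mp hJ1, Ideal.mul_top]

/-- A root of the `n`-th cyclotomic polynomial in `ZMod q`, with `q ∤ n`, forces `q ≡ 1 (mod n)`. -/
theorem modEq_one_of_isRoot_cyclotomic {q n : ℕ} (hq : q.Prime) (hqn : ¬ q ∣ n) {ζ : ZMod q}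
    (hζ : (cyclotomic n (ZMod q)).IsRoot ζ) : q ≡ 1 [MOD n] := by
  have : Fact q.Prime := ⟨hq⟩
  have : NeZero (n : ZMod q) := ⟨fun h ↦ hqn ((ZMod.natCast_eq_zero_iff _ _).mp h)⟩
  have hprim := isRoot_cyclotomic_iff.mp hζ
  have hn : n ≠ 0 := fun h ↦ hqn (h ▸ dvd_zero q)
  refine ((Nat.modEq_iff_dvd' hq.one_le).mpr ?_).symm
  exact hprim.dvd_of_pow_eq_one _ (ZMod.pow_card_sub_one_eq_one (hprim.ne_zero hn))

/-- For any number field `F` and any `n > 0`, some number field receives `[F : ℚ]` embeddings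
of `F` and contains a root of the `n`-th cyclotomic polynomial. -/
theorem exists_numberField_card_algHom_isRoot_cyclotomic (F : Type*) [Field F] [NumberField F]
    {n : ℕ} (hn : 0 < n) :
    ∃ (L : Type) (_ : Field L) (_ : NumberField L),
      Nat.card (F →ₐ[ℚ] L) = Module.finrank ℚ F ∧
      ∃ ζ : 𝓞 L, (cyclotomic n (𝓞 L)).IsRoot ζ := by
  obtain ⟨B, -, -⟩ := exists_powerBasis_integral_gen F
  set f : ℚ[X] := minpoly ℚ B.gen * cyclotomic n ℚ
  have hf : f ≠ 0 := mul_ne_zero (minpoly.ne_zero B.isIntegral_gen) (cyclotomic_ne_zero n ℚ)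
  have hsplit := SplittingField.splits f
  have hf' : f.map (algebraMap ℚ f.SplittingField) ≠ 0 := Polynomial.map_ne_zero hf
  have : CharZero f.SplittingField := charZero_of_injective_algebraMap
    (algebraMap ℚ f.SplittingField).injective
  have hnf : NumberField f.SplittingField := { }
  refine ⟨f.SplittingField, inferInstance, hnf, ?_, ?_⟩
  · rw [B.finrank, ← AlgHom.natCard_of_powerBasis B (Algebra.IsSeparable.isSeparable ℚ _)
      (hsplit.of_dvd hf' (Polynomial.map_dvd _ (dvd_mul_right _ _)))]
    congr!
  · have hc := hsplit.of_dvd hf' (Polynomial.map_dvd _ (dvd_mul_left (cyclotomic n ℚ) _))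
    rw [map_cyclotomic] at hc
    obtain ⟨ζ, hζ⟩ := hc.exists_eval_eq_zero (degree_cyclotomic_pos n _ hn).ne'
    have hint : IsIntegral ℤ ζ := ⟨cyclotomic n ℤ, cyclotomic.monic n ℤ, by
      rwa [← eval_map, map_cyclotomic]⟩
    obtain ⟨ξ, rfl⟩ := (IsIntegralClosure.isIntegral_iff (A := 𝓞 f.SplittingField)).mp hint
    refine ⟨ξ, IsRoot.of_map (f := algebraMap (𝓞 f.SplittingField) f.SplittingField) ?_
      RingOfIntegers.coe_injective⟩
    rwa [map_cyclotomic]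

/-- Let `F` be a number field in which the prime number `p` is unramified
(equivalently, the ideal `p 𝓞_F` is squarefree), and let `n ≥ 1`.  Then there exist
infinitely many prime numbers `q` such that `q ≡ 1 (mod pⁿ)` and `q` splits completely in
`F`, i.e. `q 𝓞_F` factors as a product of `[F : ℚ]` distinct prime ideals of `𝓞_F`, each
with residue field of cardinality `q`. -/
theorem infinitely_many_split_primes_one_mod_pn
    (F : Type*) [Field F] [NumberField F]
    (p : ℕ) (hp : p.Prime)
    (hunr : Squarefree (Ideal.span {(p : 𝓞 F)} : Ideal (𝓞 F)))
    (n : ℕ) (hn : 1 ≤ n) :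
    {q : ℕ | q.Prime ∧ q ≡ 1 [MOD p ^ n] ∧
      ∃ s : Finset (Ideal (𝓞 F)), s.card = Module.finrank ℚ F ∧
        (∀ P ∈ s, P.IsPrime ∧ Ideal.absNorm P = q) ∧
        Ideal.span {(q : 𝓞 F)} = ∏ P ∈ s, P}.Infinite := by
  classical
  obtain ⟨L, _, _, hcard, ζ, hζ⟩ :=
    exists_numberField_card_algHom_isRoot_cyclotomic F (pow_pos hp.pos n)
  obtain ⟨B, hint, -⟩ := exists_powerBasis_integral_gen F
  obtain ⟨α, hα⟩ := (IsIntegralClosure.isIntegral_iff (A := 𝓞 F)).mp hint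
  have := Fintype.ofFinite (F →ₐ[ℚ] L)
  let g (σ : F →ₐ[ℚ] L) : 𝓞 F →+* 𝓞 L := RingOfIntegers.mapRingHom (σ : F →+* L)
  set D : 𝓞 L := ∏ σ : F →ₐ[ℚ] L, ∏ τ ∈ Finset.univ.erase σ, (g σ α - g τ α)
  have hD : D ≠ 0 := by
    refine Finset.prod_ne_zero_iff.mpr fun σ _ ↦ Finset.prod_ne_zero_iff.mpr fun τ hτ h ↦ ?_
    refine (Finset.mem_erase.mp hτ).1 (B.algHom_ext ?_)
    rw [← hα]
    exact (congrArg (algebraMap (𝓞 L) L) (sub_eq_zero.mp h)).symm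
  refine Set.infinite_of_not_bddAbove fun ⟨b, hb⟩ ↦ ?_
  obtain ⟨q, hq, hbq, φ, hφ⟩ := exists_ringHom_zmod hD (max b (p ^ n))
  have : Fact q.Prime := ⟨hq⟩
  have hmod : q ≡ 1 [MOD p ^ n] := by
    refine modEq_one_of_isRoot_cyclotomic hq (ζ := φ ζ) ?_ ?_
    · exact fun h ↦ (Nat.le_of_dvd (pow_pos hp.pos n) h).not_gt ((le_max_right _ _).trans_lt hbq)
    · rw [← map_cyclotomic _ φ]
      exact hζ.map
  refine ((le_max_left _ _).trans_lt hbq).not_ge (hb ⟨hq, hmod, ?_⟩)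
  refine span_natCast_eq_prod_of_card_ringHom hq hcard (fun σ ↦ φ.comp (g σ)) ?_
  intro σ τ h
  by_contra hne
  simp only [D, map_prod, Finset.prod_ne_zero_iff] at hφ
  refine hφ σ (Finset.mem_univ _) τ (Finset.mem_erase.mpr ⟨Ne.symm hne, Finset.mem_univ _⟩) ?_
  rw [map_sub, sub_eq_zero]
  exact RingHom.congr_fun h α
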